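/- The set 𝒞^{(p,q)} of type (p,q) closed subgroups of ℝⁿ, as an orbit of GL(n,ℝ), is a manifold of dimension (p+q)(n−p). -/

import Mathlib

noncomputable section

abbrev Euc (n : ℕ) := EuclideanSpace ℝ (Fin n)

/-- A point of the Chabauty space of ℝⁿ: a closed additive subgroup. -/
def ChabautyPoint (n : ℕ) : Type := {Γ : AddSubgroup (Euc n) // IsClosed (Γ : Set (Euc n))}

/-- The Chabauty (Fell) topology on the space of closed subgroups of ℝⁿ. -/
instance chabautyTopology (n : ℕ) : TopologicalSpace (ChabautyPoint n) :=
  TopologicalSpace.generateFrom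
    ({S | ∃ K : Set (Euc n), IsCompact K ∧
        S = {Γ : ChabautyPoint n | ((Γ.1 : Set (Euc n)) ∩ K) = ∅}} ∪
     {S | ∃ U : Set (Euc n), IsOpen U ∧
        S = {Γ : ChabautyPoint n | ((Γ.1 : Set (Euc n)) ∩ U).Nonempty}})

/-- The stratum of type (p,q) closed subgroups of ℝⁿ. -/
def stratum (n p q : ℕ) : Set (ChabautyPoint n) :=
  {Γ : ChabautyPoint n |
    ∃ e : Γ.1 ≃+ ((Fin p → ℝ) × (Fin q → ℤ)), Continuous e ∧ Continuous e.symm}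

/-!
A closed subgroup of type `(p, q)` is the image `L (P × ℤ^q)` of an injective linear map
`L : P × ℝ^q → ℝⁿ`, where `P = ℝ^p`. Given `L₀`, choose `π : ℝⁿ → P` with `π ∘ L₀ = fst`. On the
affine slice `{L | π ∘ L = fst}`, of dimension `(p + q) n - (p + q) p`, the map `L ↦ L (P × ℤ^q)`
is injective near `L₀`: equality of images forces `L` and `L'` to differ by vectors of the discrete
factor, and these are too long. It is open: if `Γ` is Chabauty-close to `Γ₀ = L₀ (P × ℤ^q)`, then
its vector subspace is a graph over `L₀ P`, and correcting vectors of `Γ` close to the `L₀ eⱼ` by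
this subspace gives `L` in the slice, close to `L₀`, with `L (P × ℤ^q) ≤ Γ`. Equality holds because
`L⁻¹ Γ` contains `P × ℤ^q` and stays within distance `1 / 3` of it, so that a further element would
generate a bounded nontrivial subgroup of a vector space.
-/

open Filter Metric Module Set Topology

section StandardSubgroup

variable {P ι : Type*} [NormedAddCommGroup P]

/-- The inclusion of `P × ℤ^ι` into `P × ℝ^ι`. -/
def stdHom (P ι : Type*) [NormedAddCommGroup P] : P × (ι → ℤ) →+ P × (ι → ℝ) :=
  (AddMonoidHom.id P).prodMap ((Int.castAddHom ℝ).compLeft ι)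

/-- The subgroup `P × ℤ^ι` of `P × ℝ^ι`, the model of the closed subgroups of type
`(dim P, |ι|)`. -/
def stdSubgroup (P ι : Type*) [NormedAddCommGroup P] : AddSubgroup (P × (ι → ℝ)) :=
  (stdHom P ι).range

theorem mem_stdSubgroup {z : P × (ι → ℝ)} :
    z ∈ stdSubgroup P ι ↔ ∃ m : ι → ℤ, ∀ j, (m j : ℝ) = z.2 j := by
  constructor
  · rintro ⟨⟨x, m⟩, rfl⟩
    exact ⟨m, fun _ => rfl⟩
  · rintro ⟨m, hm⟩
    exact ⟨(z.1, m), Prod.ext rfl (funext hm)⟩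

theorem mk_zero_mem_stdSubgroup (x : P) : (x, (0 : ι → ℝ)) ∈ stdSubgroup P ι :=
  mem_stdSubgroup.mpr ⟨0, by simp⟩

theorem mk_single_mem_stdSubgroup [DecidableEq ι] (x : P) (i : ι) :
    (x, (Pi.single i 1 : ι → ℝ)) ∈ stdSubgroup P ι :=
  mem_stdSubgroup.mpr ⟨Pi.single i 1, fun j => by simp [Pi.single_apply]⟩

theorem isClosedEmbedding_stdHom [Finite ι] : IsClosedEmbedding (stdHom P ι) :=
  IsClosedEmbedding.id.prodMap (.piMap fun _ => Int.isClosedEmbedding_coe_real)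

theorem isClosed_stdSubgroup [Finite ι] : IsClosed (stdSubgroup P ι : Set (P × (ι → ℝ))) :=
  isClosedEmbedding_stdHom.isClosed_range

variable [Fintype ι]

theorem snd_eq_zero_of_mem_stdSubgroup {d : P × (ι → ℝ)} (hd : d ∈ stdSubgroup P ι)
    (h : ‖d.2‖ < 1) : d.2 = 0 := by
  obtain ⟨m, hm⟩ := mem_stdSubgroup.mp hd
  ext j
  have hj : |(m j : ℝ)| < 1 := by
    rw [hm, ← Real.norm_eq_abs]
    exact (norm_le_pi_norm d.2 j).trans_lt h
  have hmj : m j = 0 := Int.abs_lt_one_iff.mp (by exact_mod_cast hj)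
  rw [← hm, hmj, Int.cast_zero, Pi.zero_apply]

theorem exists_mem_stdSubgroup_norm_sub_le_one (z : P × (ι → ℝ)) :
    ∃ d ∈ stdSubgroup P ι, ‖z - d‖ ≤ 1 := by
  refine ⟨(z.1, fun j => ⌊z.2 j⌋), mem_stdSubgroup.mpr ⟨_, fun _ => rfl⟩,
    norm_prod_le_iff.mpr ⟨by simp, (pi_norm_le_iff_of_nonneg zero_le_one).mpr fun j => ?_⟩⟩
  simpa [abs_of_nonneg] using (Int.fract_lt_one (z.2 j)).le

/-- Dirichlet approximation: multiples in the compact torus `ℝ^ι / ℤ^ι` return close to zero. -/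
theorem exists_nsmul_norm_sub_stdSubgroup_lt (z : P × (ι → ℝ)) {δ : ℝ} (hδ : 0 < δ) :
    ∃ k : ℕ, 0 < k ∧ ∃ d ∈ stdSubgroup P ι, ‖k • z - d‖ < δ := by
  let t : ι → UnitAddCircle := fun j => z.2 j
  obtain ⟨k, hk, hkt⟩ := ((mapClusterPt_zero_atTop_nsmul t).frequently
    (ball_mem_nhds 0 hδ)).forall_exists_of_atTop 1
  refine ⟨k, hk, (k • z.1, fun j => round (k • z.2 j)),
    mem_stdSubgroup.mpr ⟨_, fun _ => rfl⟩, ?_⟩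
  rw [dist_zero_right, pi_norm_lt_iff hδ] at hkt
  rw [Prod.norm_def]
  refine max_lt (by simpa using hδ) ((pi_norm_lt_iff hδ).mpr fun j => ?_)
  have hj := hkt j
  rwa [Pi.smul_apply, ← AddCircle.coe_nsmul, UnitAddCircle.norm_eq] at hj

theorem eq_zero_of_forall_norm_nsmul_lt {E : Type*} [NormedAddCommGroup E] [NormedSpace ℝ E]
    {x : E} {r : ℝ} (h : ∀ k : ℕ, ‖k • x‖ < r) : x = 0 := by
  by_contra hx
  obtain ⟨k, hk⟩ := Archimedean.arch r (norm_pos_iff.mpr hx)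
  rw [nsmul_eq_mul, ← Real.norm_natCast, ← norm_smul, Nat.cast_smul_eq_nsmul] at hk
  exact (h k).not_ge hk

theorem eq_stdSubgroup_of_le_of_near {T : AddSubgroup (P × (ι → ℝ))} (hle : stdSubgroup P ι ≤ T)
    (hnear : ∀ t ∈ T, ∃ d ∈ stdSubgroup P ι, ‖t - d‖ < 1 / 3) : T = stdSubgroup P ι := by
  have small : ∀ s ∈ T, ‖s.2‖ < 2 / 3 → ‖s.2‖ < 1 / 3 := by
    intro s hs hs2
    obtain ⟨d, hd, hsd⟩ := hnear s hs
    have hsd2 : ‖s.2 - d.2‖ < 1 / 3 := (norm_snd_le (s - d)).trans_lt hsd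
    have hd2 : d.2 = 0 := snd_eq_zero_of_mem_stdSubgroup hd <| by
      linarith [norm_le_norm_add_norm_sub' d.2 s.2, norm_sub_rev s.2 d.2]
    rwa [hd2, sub_zero] at hsd2
  refine le_antisymm (fun t ht => ?_) hle
  obtain ⟨d, hd, htd⟩ := hnear t ht
  have hs : t - d ∈ T := T.sub_mem ht (hle hd)
  have hs2 : ‖(t - d).2‖ < 1 / 3 := (norm_snd_le _).trans_lt htd
  have hzero : (t - d).2 = 0 := eq_zero_of_forall_norm_nsmul_lt (r := 1 / 3) fun k => by
    induction k with
    | zero => simp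
    | succ k ih =>
      refine small ((k + 1) • (t - d)) (T.nsmul_mem hs _) ?_
      rw [Prod.smul_snd, succ_nsmul]
      linarith [norm_add_le (k • (t - d).2) (t - d).2]
  rw [← sub_add_cancel t d]
  refine add_mem ?_ hd
  rw [← Prod.mk.eta (p := t - d), hzero]
  exact mk_zero_mem_stdSubgroup _

theorem eq_mk_zero_add_sum_single [DecidableEq ι] (z : P × (ι → ℝ)) :
    z = (z.1, 0) + ∑ j, (0, z.2 j • Pi.single j 1) := by
  refine Prod.ext (by simp [Prod.fst_sum]) ?_
  simpa [Prod.snd_sum] using pi_eq_sum_univ' z.2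

variable [NormedSpace ℝ P]

theorem span_stdSubgroup_inter_closedBall :
    Submodule.span ℝ ((stdSubgroup P ι : Set (P × (ι → ℝ))) ∩ closedBall 0 1) = ⊤ := by
  classical
  set S := Submodule.span ℝ ((stdSubgroup P ι : Set (P × (ι → ℝ))) ∩ closedBall 0 1)
  have hfst : ∀ x : P, (x, (0 : ι → ℝ)) ∈ S := fun x => by
    rcases eq_or_ne x 0 with rfl | hx
    · exact S.zero_mem
    have hunit : (‖x‖⁻¹ • x, (0 : ι → ℝ)) ∈ S := Submodule.subset_span
      ⟨mk_zero_mem_stdSubgroup _, by simp [Prod.norm_def, norm_smul, hx]⟩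
    simpa [smul_smul, hx] using S.smul_mem ‖x‖ hunit
  have hsnd : ∀ j, ((0 : P), (Pi.single j 1 : ι → ℝ)) ∈ S := fun j =>
    Submodule.subset_span ⟨mk_single_mem_stdSubgroup _ _, by simp [Prod.norm_def, Pi.norm_single]⟩
  refine Submodule.eq_top_iff'.mpr fun z => ?_
  rw [eq_mk_zero_add_sum_single z]
  refine S.add_mem (hfst _) (S.sum_mem fun j _ => ?_)
  simpa using S.smul_mem (z.2 j) (hsnd j)

end StandardSubgroup

section Perturbation

variable {V E : Type*} [NormedAddCommGroup V] [NormedSpace ℝ V]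
  [NormedAddCommGroup E] [NormedSpace ℝ E]

theorem exists_pos_forall_mul_norm_le_of_injective [FiniteDimensional ℝ V] {L : V →L[ℝ] E}
    (hL : Function.Injective L) : ∃ c > 0, ∀ z, c * ‖z‖ ≤ ‖L z‖ := by
  obtain ⟨K, hK, hLK⟩ :=
    LinearMap.exists_antilipschitzWith L.toLinearMap (LinearMap.ker_eq_bot.mpr hL)
  have hK' : (0 : ℝ) < K := mod_cast hK
  exact ⟨K⁻¹, inv_pos.mpr hK', fun z =>
    (inv_mul_le_iff₀ hK').mpr (L.bound_of_antilipschitz hLK z)⟩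

theorem sub_mul_norm_le_of_norm_sub_le {L L' : V →L[ℝ] E} {c r : ℝ}
    (hL : ∀ z, c * ‖z‖ ≤ ‖L z‖) (h : ‖L' - L‖ ≤ r) (z : V) : (c - r) * ‖z‖ ≤ ‖L' z‖ := by
  have hz : ‖L' z - L z‖ ≤ r * ‖z‖ := (L' - L).le_of_opNorm_le h z
  linarith [hL z, norm_le_norm_add_norm_sub (L' z) (L z)]

theorem injective_of_norm_sub_lt {L L' : V →L[ℝ] E} {c : ℝ} (hL : ∀ z, c * ‖z‖ ≤ ‖L z‖)
    (h : ‖L' - L‖ < c) : Function.Injective L' := by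
  refine (injective_iff_map_eq_zero L').mpr fun z hz => norm_le_zero_iff.mp ?_
  have hz' := sub_mul_norm_le_of_norm_sub_le (L' := L') hL le_rfl z
  rw [hz, norm_zero] at hz'
  exact nonpos_of_mul_nonpos_right hz' (sub_pos.mpr h)

/-- `W` is the graph of a map from `P` in the splitting `E = J P ⊕ ker π`. -/
theorem exists_section_range_le {P : Type*} [NormedAddCommGroup P] [NormedSpace ℝ P]
    [FiniteDimensional ℝ P] {J : P →L[ℝ] E} {π : E →L[ℝ] P} {W : Submodule ℝ E}
    [FiniteDimensional ℝ W] (hW : finrank ℝ W = finrank ℝ P) {δ : ℝ} (hδ : 0 ≤ δ) (hδ' : δ ≤ 1 / 2)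
    (h : ∀ w ∈ W, ‖w - J (π w)‖ ≤ δ * ‖w‖) :
    ∃ A : P →L[ℝ] E, (∀ x, A x ∈ W) ∧ (∀ x, π (A x) = x) ∧ ‖A - J‖ ≤ 2 * δ * ‖J‖ := by
  have hinj : Function.Injective (π.toLinearMap ∘ₗ W.subtype) := by
    refine (injective_iff_map_eq_zero _).mpr fun w hw => norm_le_zero_iff.mp ?_
    have hw' := h w w.2
    rw [show π w = 0 from hw, map_zero, sub_zero] at hw'
    change ‖(w : E)‖ ≤ 0
    nlinarith [norm_nonneg (w : E)]
  let e : W ≃ₗ[ℝ] P := LinearEquiv.ofInjectiveOfFinrankEq _ hinj hW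
  have he : ∀ x, π (e.symm x) = x := e.apply_symm_apply
  refine ⟨LinearMap.toContinuousLinearMap (W.subtype ∘ₗ e.symm), fun x => (e.symm x).2, he,
    ContinuousLinearMap.opNorm_le_bound _ (by positivity) fun x => ?_⟩
  have hx := h _ (e.symm x).2
  rw [he] at hx
  change ‖(e.symm x : E) - J x‖ ≤ _
  nlinarith [norm_le_norm_add_norm_sub (J x) (e.symm x : E), norm_sub_rev (e.symm x : E) (J x),
    mul_le_mul_of_nonneg_left (J.le_opNorm x) hδ, norm_nonneg ((e.symm x : E) - J x)]

end Perturbation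

section LinearCombination

variable {P ι E : Type*} [NormedAddCommGroup P] [NormedSpace ℝ P]
  [NormedAddCommGroup E] [NormedSpace ℝ E] [Fintype ι]

theorem apply_eq_add_sum_smul [DecidableEq ι] (L : P × (ι → ℝ) →L[ℝ] E) (z : P × (ι → ℝ)) :
    L z = L (z.1, 0) + ∑ j, z.2 j • L (0, Pi.single j 1) := by
  conv_lhs => rw [eq_mk_zero_add_sum_single z, map_add, map_sum]
  simp [← map_smul]

/-- The linear map equal to `A` on `P` and sending the standard basis of `ℝ^ι` to `g`. -/
def coprodLinearCombination (A : P →L[ℝ] E) (g : ι → E) : P × (ι → ℝ) →L[ℝ] E :=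
  A.coprod (∑ j, (ContinuousLinearMap.proj j).smulRight (g j))

theorem coprodLinearCombination_apply (A : P →L[ℝ] E) (g : ι → E) (z : P × (ι → ℝ)) :
    coprodLinearCombination A g z = A z.1 + ∑ j, z.2 j • g j := by
  simp [coprodLinearCombination]

theorem coprodLinearCombination_mk_zero (A : P →L[ℝ] E) (g : ι → E) (x : P) :
    coprodLinearCombination A g (x, 0) = A x := by
  simp [coprodLinearCombination_apply]

theorem coprodLinearCombination_zero_single [DecidableEq ι] (A : P →L[ℝ] E) (g : ι → E) (j : ι) :
    coprodLinearCombination A g (0, Pi.single j 1) = g j := by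
  simp [coprodLinearCombination_apply, Pi.single_apply]

theorem eq_coprodLinearCombination [DecidableEq ι] (L : P × (ι → ℝ) →L[ℝ] E) :
    L = coprodLinearCombination (L ∘L .inl ℝ P (ι → ℝ)) fun j => L (0, Pi.single j 1) := by
  refine ContinuousLinearMap.ext fun z => ?_
  rw [apply_eq_add_sum_smul L z, coprodLinearCombination_apply]
  rfl

theorem continuous_coprodLinearCombination :
    Continuous fun a : (P →L[ℝ] E) × (ι → E) => coprodLinearCombination a.1 a.2 := by
  unfold coprodLinearCombination
  fun_prop

end LinearCombination

section StandardImage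

variable {P ι E : Type*} [NormedAddCommGroup P] [NormedSpace ℝ P]
  [NormedAddCommGroup E] [NormedSpace ℝ E]

theorem exists_comp_eq_fst [Finite ι] [FiniteDimensional ℝ E] {L : P × (ι → ℝ) →L[ℝ] E}
    (hL : Function.Injective L) : ∃ π : E →L[ℝ] P, π ∘L L = .fst ℝ P (ι → ℝ) := by
  obtain ⟨l, hl⟩ := ContinuousLinearMap.HasLeftInverse.of_injective_of_finiteDimensional hL
  exact ⟨.fst ℝ P (ι → ℝ) ∘L l, ContinuousLinearMap.ext fun z => congrArg Prod.fst (hl z)⟩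

theorem exists_clm_comp_stdHom_eq [Finite ι] {f : P × (ι → ℤ) →+ E} (hf : Continuous f) :
    ∃ L : P × (ι → ℝ) →L[ℝ] E, ∀ y, L (stdHom P ι y) = f y := by
  classical
  cases nonempty_fintype ι
  refine ⟨coprodLinearCombination ((f.comp (.inl P (ι → ℤ))).toRealLinearMap
    (hf.comp (Continuous.prodMk_left 0))) fun j => f (0, Pi.single j 1), fun y => ?_⟩
  have hy : y = (y.1, 0) + ∑ j, y.2 j • ((0 : P), (Pi.single j 1 : ι → ℤ)) := by
    refine Prod.ext (by simp [Prod.fst_sum]) ?_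
    simpa [Prod.snd_sum] using pi_eq_sum_univ' y.2
  conv_rhs => rw [hy, map_add, map_sum]
  simp [-Prod.smul_mk, coprodLinearCombination_apply, stdHom, Int.cast_smul_eq_zsmul]

/-- The image of `P × ℤ^ι` under a linear map defined on `P × ℝ^ι`. -/
def stdImage (L : P × (ι → ℝ) →L[ℝ] E) : AddSubgroup E :=
  (stdSubgroup P ι).map (L : P × (ι → ℝ) →+ E)

theorem mem_stdImage {L : P × (ι → ℝ) →L[ℝ] E} {g : E} :
    g ∈ stdImage L ↔ ∃ d ∈ stdSubgroup P ι, L d = g :=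
  Iff.rfl

theorem apply_mem_stdImage {L : P × (ι → ℝ) →L[ℝ] E} {d : P × (ι → ℝ)}
    (hd : d ∈ stdSubgroup P ι) : L d ∈ stdImage L :=
  ⟨d, hd, rfl⟩

theorem coe_stdImage (L : P × (ι → ℝ) →L[ℝ] E) :
    (stdImage L : Set E) = range (L ∘ stdHom P ι) :=
  (range_comp L (stdHom P ι)).symm

theorem isClosedEmbedding_comp_stdHom [Finite ι] [FiniteDimensional ℝ P]
    {L : P × (ι → ℝ) →L[ℝ] E} (hL : Function.Injective L) :
    IsClosedEmbedding (L ∘ stdHom P ι) :=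
  (LinearMap.isClosedEmbedding_of_injective (f := L.toLinearMap)
    (LinearMap.ker_eq_bot.mpr hL)).comp isClosedEmbedding_stdHom

theorem isClosed_stdImage [Finite ι] [FiniteDimensional ℝ P] {L : P × (ι → ℝ) →L[ℝ] E}
    (hL : Function.Injective L) : IsClosed (stdImage L : Set E) := by
  rw [coe_stdImage]
  exact (isClosedEmbedding_comp_stdHom hL).isClosed_range

theorem stdImage_le [Finite ι] [DecidableEq ι] {L : P × (ι → ℝ) →L[ℝ] E} {Γ : AddSubgroup E}
    (hfst : ∀ x, L (x, 0) ∈ Γ) (hsnd : ∀ j, L (0, Pi.single j 1) ∈ Γ) : stdImage L ≤ Γ := by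
  cases nonempty_fintype ι
  rintro _ ⟨d, hd, rfl⟩
  obtain ⟨m, hm⟩ := mem_stdSubgroup.mp hd
  change L d ∈ Γ
  rw [apply_eq_add_sum_smul]
  simp only [← hm, Int.cast_smul_eq_zsmul]
  exact Γ.add_mem (hfst _) (Γ.sum_mem fun j _ => Γ.zsmul_mem (hsnd j) _)

theorem range_le_range_of_stdImage_le [Finite ι] {L L' : P × (ι → ℝ) →L[ℝ] E}
    (h : stdImage L' ≤ stdImage L) : L'.range ≤ L.range := by
  cases nonempty_fintype ι
  rw [LinearMap.range_eq_map, ← span_stdSubgroup_inter_closedBall, Submodule.map_span,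
    Submodule.span_le]
  rintro _ ⟨d, ⟨hd, -⟩, rfl⟩
  obtain ⟨d', -, hd'⟩ := h (apply_mem_stdImage hd)
  exact ⟨d', hd'⟩

variable [Fintype ι]

/-- On the slice `π ∘ L = fst` the only freedom left is in the discrete factor `ℤ^ι`, which the
proximity of `L` and `L'` removes. -/
theorem eq_of_stdImage_eq {L L' : P × (ι → ℝ) →L[ℝ] E} {c : ℝ}
    (hL' : ∀ z, c * ‖z‖ ≤ ‖L' z‖) (hLL' : ‖L - L'‖ < c)
    {π : E →L[ℝ] P} (hπ : π ∘L L = .fst ℝ P (ι → ℝ)) (hπ' : π ∘L L' = .fst ℝ P (ι → ℝ))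
    (h : stdImage L = stdImage L') : L = L' := by
  have hc : 0 < c := (norm_nonneg _).trans_lt hLL'
  refine ContinuousLinearMap.coe_injective
    (LinearMap.ext_on span_stdSubgroup_inter_closedBall fun d ⟨hd, hd1⟩ => ?_)
  obtain ⟨d', hd', hdd'⟩ := h ▸ apply_mem_stdImage (L := L) hd
  replace hdd' : L' d' = L d := hdd'
  have hfst : (d' - d).1 = 0 := by
    have hd₁ : π (L d) = d.1 := DFunLike.congr_fun hπ d
    have hd₁' : π (L' d') = d'.1 := DFunLike.congr_fun hπ' d'
    rw [Prod.fst_sub, ← hd₁, ← hd₁', hdd', sub_self]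
  have hsmall : c * ‖d' - d‖ < c := calc
    c * ‖d' - d‖ ≤ ‖L' (d' - d)‖ := hL' _
    _ = ‖(L - L') d‖ := by rw [map_sub, hdd', sub_apply]
    _ ≤ ‖L - L'‖ := (L - L').unit_le_opNorm d (mem_closedBall_zero_iff.mp hd1)
    _ < c := hLL'
  have hsnd : (d' - d).2 = 0 := snd_eq_zero_of_mem_stdSubgroup (sub_mem hd' hd)
    ((norm_snd_le _).trans_lt (lt_of_mul_lt_mul_left (by rwa [mul_one]) hc.le))
  rw [sub_eq_zero.mp (Prod.ext hfst hsnd : d' - d = 0)] at hdd'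
  exact hdd'.symm

/-- The preimage of `stdImage L` under `L'` contains `P × ℤ^ι` and stays near it. -/
theorem stdImage_eq_of_le_of_near [FiniteDimensional ℝ P] {L₁ L L' : P × (ι → ℝ) →L[ℝ] E} {c : ℝ}
    (hc : 0 < c) (hL₁ : ∀ z, c * ‖z‖ ≤ ‖L₁ z‖) (hL : Function.Injective L)
    (hL' : ‖L' - L₁‖ < c / 6) (hle : stdImage L' ≤ stdImage L)
    (hnear : (stdImage L : Set E) ∩ closedBall 0 (‖L₁‖ + c) ⊆ thickening (c / 6) (stdImage L₁)) :
    stdImage L = stdImage L' := by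
  have hinj : Function.Injective L' := injective_of_norm_sub_lt hL₁ (by linarith)
  have hrange : L'.range = L.range := Submodule.eq_of_le_of_finrank_eq
    (range_le_range_of_stdImage_le hle)
    ((LinearMap.finrank_range_of_inj hinj).trans (LinearMap.finrank_range_of_inj hL).symm)
  have hnorm : ‖L'‖ ≤ ‖L₁‖ + c := by linarith [norm_le_norm_add_norm_sub' L' L₁]
  have hcomap : (stdImage L).comap (L' : P × (ι → ℝ) →+ E) = stdSubgroup P ι := by
    refine eq_stdSubgroup_of_le_of_near (fun d hd => hle (apply_mem_stdImage hd)) fun t ht => ?_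
    obtain ⟨k, hk, htk⟩ := exists_mem_stdSubgroup_norm_sub_le_one t
    have hmem : L' (t - k) ∈ stdImage L := by
      rw [map_sub]
      exact sub_mem ht (hle (apply_mem_stdImage hk))
    obtain ⟨_, ⟨d, hd, rfl⟩, hlt⟩ := mem_thickening_iff.mp
      (hnear ⟨hmem, mem_closedBall_zero_iff.mpr ((L'.unit_le_opNorm _ htk).trans hnorm)⟩)
    replace hlt : ‖L' (t - k) - L₁ d‖ < c / 6 := dist_eq_norm (L' (t - k)) (L₁ d) ▸ hlt
    refine ⟨k + d, add_mem hk hd, ?_⟩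
    have hclose : ‖L₁ (t - k - d)‖ < c / 3 := calc
      ‖L₁ (t - k - d)‖ = ‖(L' (t - k) - L₁ d) - (L' - L₁) (t - k)‖ := by
        rw [sub_apply, map_sub L₁ (t - k)]
        abel_nf
      _ ≤ ‖L' (t - k) - L₁ d‖ + ‖(L' - L₁) (t - k)‖ := norm_sub_le _ _
      _ < c / 3 := by linarith [(L' - L₁).unit_le_opNorm _ htk]
    rw [← sub_sub]
    nlinarith [hL₁ (t - k - d)]
  refine le_antisymm (fun g hg => ?_) hle
  obtain ⟨d, -, rfl⟩ := id hg
  obtain ⟨t, ht⟩ : L d ∈ L'.range := hrange ▸ ⟨d, rfl⟩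
  replace ht : L' t = L d := ht
  have htD : t ∈ stdSubgroup P ι := hcomap ▸ show L' t ∈ stdImage L from ht ▸ hg
  exact ⟨t, htD, ht⟩

/-- On the sphere of radius `c / 2`, the only points of `stdImage L₁` close to `W` come from `P`. -/
theorem norm_sub_le_of_inter_subset_thickening {L₁ : P × (ι → ℝ) →L[ℝ] E} {c ε : ℝ} (hc : 0 < c)
    (hL₁ : ∀ z, c * ‖z‖ ≤ ‖L₁ z‖) {π : E →L[ℝ] P} (hπ : π ∘L L₁ = .fst ℝ P (ι → ℝ))
    (hε : ε ≤ c / 2) {δ : ℝ}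
    (hδ : ‖.id ℝ E - (L₁ ∘L .inl ℝ P (ι → ℝ)) ∘L π‖ * ε ≤ δ * (c / 2)) {W : Submodule ℝ E}
    (hW : (W : Set E) ∩ closedBall 0 (c / 2) ⊆ thickening ε (stdImage L₁)) {w : E} (hw : w ∈ W) :
    ‖w - L₁ (π w, 0)‖ ≤ δ * ‖w‖ := by
  set Q := ContinuousLinearMap.id ℝ E - (L₁ ∘L .inl ℝ P (ι → ℝ)) ∘L π
  have hQ : ∀ u ∈ W, ‖u‖ = c / 2 → ‖Q u‖ ≤ ‖Q‖ * ε := by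
    intro u hu hnorm
    obtain ⟨_, ⟨d, hd, rfl⟩, hlt⟩ :=
      mem_thickening_iff.mp (hW ⟨hu, mem_closedBall_zero_iff.mpr hnorm.le⟩)
    replace hlt : ‖u - L₁ d‖ < ε := dist_eq_norm u (L₁ d) ▸ hlt
    have hd2 : d.2 = 0 := by
      refine snd_eq_zero_of_mem_stdSubgroup hd ((norm_snd_le d).trans_lt ?_)
      nlinarith [hL₁ d, norm_le_norm_add_norm_sub u (L₁ d)]
    have hQd : Q (L₁ d) = 0 := by
      have hπd : π (L₁ d) = d.1 := DFunLike.congr_fun hπ d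
      have hd' : L₁ (d.1, 0) = L₁ d := by rw [← hd2]
      simp [Q, hπd, hd']
    calc ‖Q u‖ = ‖Q (u - L₁ d)‖ := by rw [map_sub, hQd, sub_zero]
      _ ≤ ‖Q‖ * ε := Q.le_opNorm_of_le hlt.le
  rcases eq_or_ne w 0 with rfl | hw0
  · rw [map_zero, Prod.mk_zero_zero, map_zero, sub_zero, norm_zero, mul_zero]
  have hw0' : 0 < ‖w‖ := norm_pos_iff.mpr hw0
  have hscale : ‖c / 2 / ‖w‖‖ = c / 2 / ‖w‖ := Real.norm_of_nonneg (by positivity)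
  have hscaled : c / 2 / ‖w‖ * ‖Q w‖ ≤ δ * (c / 2) := calc
    c / 2 / ‖w‖ * ‖Q w‖ = ‖Q ((c / 2 / ‖w‖) • w)‖ := by rw [map_smul, norm_smul, hscale]
    _ ≤ ‖Q‖ * ε := hQ _ (W.smul_mem _ hw) (by
      rw [norm_smul, hscale, div_mul_cancel₀ _ hw0'.ne'])
    _ ≤ δ * (c / 2) := hδ
  change ‖Q w‖ ≤ δ * ‖w‖
  rw [div_mul_eq_mul_div, div_le_iff₀ hw0'] at hscaled
  nlinarith

theorem injective_of_forall_mem_stdSubgroup {L : P × (ι → ℝ) →L[ℝ] E} {δ r : ℝ} (hδ : 0 < δ)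
    (h : ∀ d ∈ stdSubgroup P ι, ‖L d‖ < δ → ‖d‖ < r) : Function.Injective L := by
  have hker : ∀ z, L z = 0 → ‖z‖ < r + 1 := by
    intro z hz
    obtain ⟨ρ, hρ, hLρ⟩ := exists_pos_mul_lt hδ ‖L‖
    obtain ⟨k, hk, d, hd, hkd⟩ :=
      exists_nsmul_norm_sub_stdSubgroup_lt z (lt_min hρ zero_lt_one)
    obtain ⟨hkdρ, hkd1⟩ := lt_min_iff.mp hkd
    have hLd : ‖L d‖ < δ := calc
      ‖L d‖ = ‖L (k • z - d)‖ := by rw [map_sub, map_nsmul, hz, smul_zero, zero_sub, norm_neg]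
      _ ≤ ‖L‖ * ρ := L.le_opNorm_of_le hkdρ.le
      _ < δ := hLρ
    calc ‖z‖ ≤ ‖k • z‖ := by
          rw [← Nat.cast_smul_eq_nsmul ℝ, norm_smul, Real.norm_natCast]
          exact le_mul_of_one_le_left (norm_nonneg z) (mod_cast hk)
      _ ≤ ‖d‖ + ‖k • z - d‖ := norm_le_norm_add_norm_sub' _ _
      _ < r + 1 := add_lt_add (h d hd hLd) hkd1
  refine (injective_iff_map_eq_zero L).mpr fun z hz =>
    eq_zero_of_forall_norm_nsmul_lt fun k => hker (k • z) ?_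
  rw [map_nsmul, hz, smul_zero]

end StandardImage

section Orbit

variable {P ι E : Type*} [NormedAddCommGroup P] [NormedSpace ℝ P]
  [NormedAddCommGroup E] [NormedSpace ℝ E]

theorem isOpen_setOf_stdImage_inter_nonempty {U : Set E} (hU : IsOpen U) :
    IsOpen {L : P × (ι → ℝ) →L[ℝ] E | ((stdImage L : Set E) ∩ U).Nonempty} := by
  have : {L : P × (ι → ℝ) →L[ℝ] E | ((stdImage L : Set E) ∩ U).Nonempty} =
      ⋃ d ∈ stdSubgroup P ι, {L | L d ∈ U} := by
    ext L
    simp [Set.Nonempty, mem_stdImage]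
  rw [this]
  exact isOpen_biUnion fun d _ => hU.preimage (continuous_eval_const d)

theorem eventually_stdImage_inter_eq_empty [Finite ι] [FiniteDimensional ℝ P]
    {L₀ : P × (ι → ℝ) →L[ℝ] E} (hL₀ : Function.Injective L₀) {K : Set E} (hK : IsCompact K)
    (h : (stdImage L₀ : Set E) ∩ K = ∅) : ∀ᶠ L in 𝓝 L₀, (stdImage L : Set E) ∩ K = ∅ := by
  cases nonempty_fintype ι
  obtain ⟨c, hc, hcL₀⟩ := exists_pos_forall_mul_norm_le_of_injective hL₀
  obtain ⟨R, hR⟩ := hK.isBounded.subset_closedBall 0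
  have hC : IsCompact ((stdSubgroup P ι : Set (P × (ι → ℝ))) ∩ closedBall 0 (R / (c / 2))) :=
    (isCompact_closedBall 0 _).inter_left isClosed_stdSubgroup
  have hmiss : ∀ᶠ L : P × (ι → ℝ) →L[ℝ] E in 𝓝 L₀, ∀ d ∈ (stdSubgroup P ι : Set (P × (ι → ℝ))) ∩
      closedBall 0 (R / (c / 2)), L d ∉ K := by
    refine hC.eventually_forall_of_forall_eventually fun d hd => ?_
    have hLd : L₀ d ∈ Kᶜ := fun hdK => h.le ⟨apply_mem_stdImage hd.1, hdK⟩
    exact (isBoundedBilinearMap_apply.continuous.tendsto (L₀, d)).eventually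
      (hK.isClosed.isOpen_compl.mem_nhds hLd)
  filter_upwards [hmiss, closedBall_mem_nhds L₀ (half_pos hc)] with L hL hLL₀
  refine eq_empty_of_forall_notMem ?_
  rintro _ ⟨⟨d, hd, rfl⟩, hdK⟩
  refine hL d ⟨hd, mem_closedBall_zero_iff.mpr ((le_div_iff₀' (half_pos hc)).mpr ?_)⟩ hdK
  calc c / 2 * ‖d‖ = (c - c / 2) * ‖d‖ := by ring
    _ ≤ ‖L d‖ := sub_mul_norm_le_of_norm_sub_le hcL₀ (mem_closedBall_iff_norm.mp hLL₀) d
    _ ≤ R := mem_closedBall_zero_iff.mp (hR hdK)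

end Orbit

section Slice

variable {V E P : Type*} [NormedAddCommGroup V] [NormedSpace ℝ V]
  [NormedAddCommGroup E] [NormedSpace ℝ E] [NormedAddCommGroup P] [NormedSpace ℝ P]

/-- The maps `k` with `π ∘ k = 0`: the direction of the affine slice formed by the linear maps
whose composition with `π` is prescribed. -/
def sliceDirection (V : Type*) [NormedAddCommGroup V] [NormedSpace ℝ V] (π : E →L[ℝ] P) :
    Submodule ℝ (V →L[ℝ] E) :=
  (ContinuousLinearMap.compL ℝ V E P π).ker

theorem mem_sliceDirection {π : E →L[ℝ] P} {k : V →L[ℝ] E} :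
    k ∈ sliceDirection V π ↔ π ∘L k = 0 :=
  Iff.rfl

theorem comp_add_of_mem_sliceDirection {π : E →L[ℝ] P} {k : V →L[ℝ] E}
    (hk : k ∈ sliceDirection V π) (L : V →L[ℝ] E) : π ∘L (L + k) = π ∘L L := by
  rw [ContinuousLinearMap.comp_add, mem_sliceDirection.mp hk, add_zero]

theorem finrank_continuousLinearMap [FiniteDimensional ℝ V] [FiniteDimensional ℝ E] :
    finrank ℝ (V →L[ℝ] E) = finrank ℝ V * finrank ℝ E := by
  rw [← LinearMap.toContinuousLinearMap.finrank_eq, finrank_linearMap]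

theorem finrank_sliceDirection [FiniteDimensional ℝ V] [FiniteDimensional ℝ E] {π : E →L[ℝ] P}
    (hπ : Function.Surjective π) :
    finrank ℝ (sliceDirection V π) = finrank ℝ V * (finrank ℝ E - finrank ℝ P) := by
  have : FiniteDimensional ℝ P := .of_surjective π.toLinearMap hπ
  have hsurj : (ContinuousLinearMap.compL ℝ V E P π).range = ⊤ := by
    obtain ⟨J, hJ⟩ :=
      ContinuousLinearMap.HasRightInverse.of_surjective_of_finiteDimensional hπ
    exact LinearMap.range_eq_top.mpr fun M =>
      ⟨J ∘L M, ContinuousLinearMap.ext fun v => hJ (M v)⟩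
  have hrank := (ContinuousLinearMap.compL ℝ V E P π).toLinearMap.finrank_range_add_finrank_ker
  rw [hsurj, finrank_top, finrank_continuousLinearMap, finrank_continuousLinearMap] at hrank
  change _ + finrank ℝ (sliceDirection V π) = _ at hrank
  rw [Nat.mul_sub]
  omega

end Slice

namespace ChabautyPoint

variable {n : ℕ}

theorem isOpen_setOf_inter_eq_empty {K : Set (Euc n)} (hK : IsCompact K) :
    IsOpen {Γ : ChabautyPoint n | (Γ.1 : Set (Euc n)) ∩ K = ∅} :=
  TopologicalSpace.isOpen_generateFrom_of_mem (.inl ⟨K, hK, rfl⟩)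

theorem isOpen_setOf_inter_nonempty {U : Set (Euc n)} (hU : IsOpen U) :
    IsOpen {Γ : ChabautyPoint n | ((Γ.1 : Set (Euc n)) ∩ U).Nonempty} :=
  TopologicalSpace.isOpen_generateFrom_of_mem (.inr ⟨U, hU, rfl⟩)

theorem eventually_inter_closedBall_subset_thickening (Γ₀ : ChabautyPoint n) (R : ℝ) {ε : ℝ}
    (hε : 0 < ε) :
    ∀ᶠ Γ in 𝓝 Γ₀, (Γ.1 : Set (Euc n)) ∩ closedBall 0 R ⊆ thickening ε Γ₀.1 := by
  have hK : IsCompact (closedBall (0 : Euc n) R \ thickening ε Γ₀.1) :=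
    (isCompact_closedBall 0 R).diff isOpen_thickening
  have hΓ₀ : (Γ₀.1 : Set (Euc n)) ∩ (closedBall 0 R \ thickening ε Γ₀.1) = ∅ :=
    eq_empty_of_forall_notMem fun g ⟨hg, _, hg'⟩ => hg' (self_subset_thickening hε _ hg)
  filter_upwards [(isOpen_setOf_inter_eq_empty hK).mem_nhds hΓ₀] with Γ hΓ g hg
  by_contra hg'
  exact (eq_empty_iff_forall_notMem.mp hΓ) g ⟨hg.1, hg.2, hg'⟩

theorem eventually_exists_mem_norm_sub_lt {Γ₀ : ChabautyPoint n} {g₀ : Euc n} (hg₀ : g₀ ∈ Γ₀.1)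
    {ε : ℝ} (hε : 0 < ε) : ∀ᶠ Γ in 𝓝 Γ₀, ∃ g ∈ Γ.1, ‖g - g₀‖ < ε := by
  filter_upwards [(isOpen_setOf_inter_nonempty isOpen_ball).mem_nhds
    ⟨g₀, hg₀, mem_ball_self hε⟩] with Γ ⟨g, hg, hgε⟩
  exact ⟨g, hg, mem_ball_iff_norm.mp hgε⟩

variable {P ι : Type*} [NormedAddCommGroup P] [NormedSpace ℝ P] [FiniteDimensional ℝ P]
  {Γ₀ : ChabautyPoint n} {L₀ : P × (ι → ℝ) →L[ℝ] Euc n} {π : Euc n →L[ℝ] P}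

theorem eventually_exists_section_range_le [Finite ι] (hL₀ : Function.Injective L₀)
    (hΓ₀ : Γ₀.1 = stdImage L₀) (hπ : π ∘L L₀ = .fst ℝ P (ι → ℝ)) {η : ℝ} (hη : 0 < η) :
    ∀ᶠ Γ in 𝓝 Γ₀, ∀ W : Submodule ℝ (Euc n), (W : Set (Euc n)) ⊆ Γ.1 →
      finrank ℝ W = finrank ℝ P → ∃ A : P →L[ℝ] Euc n, (∀ x, A x ∈ W) ∧ (∀ x, π (A x) = x) ∧
        ‖A - L₀ ∘L .inl ℝ P (ι → ℝ)‖ < η := by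
  cases nonempty_fintype ι
  obtain ⟨c, hc, hcL₀⟩ := exists_pos_forall_mul_norm_le_of_injective hL₀
  set J := L₀ ∘L .inl ℝ P (ι → ℝ)
  obtain ⟨δ₀, hδ₀, hδ₀η⟩ := exists_pos_mul_lt hη (2 * ‖J‖)
  set δ := min δ₀ (1 / 2)
  have hδ : 0 < δ := lt_min hδ₀ (by norm_num)
  obtain ⟨ε₀, hε₀, hε₀δ⟩ :=
    exists_pos_mul_lt (show 0 < δ * (c / 2) by positivity) ‖.id ℝ (Euc n) - J ∘L π‖
  set ε := min ε₀ (c / 2)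
  have hε : 0 < ε := lt_min hε₀ (by positivity)
  filter_upwards [eventually_inter_closedBall_subset_thickening Γ₀ (c / 2) hε] with Γ hΓ W hWΓ hW
  rw [hΓ₀] at hΓ
  obtain ⟨A, hAW, hπA, hAJ⟩ := exists_section_range_le (J := J) (π := π) hW hδ.le (min_le_right _ _)
    fun w hw => norm_sub_le_of_inter_subset_thickening hc hcL₀ hπ (min_le_right _ _)
      ((mul_le_mul_of_nonneg_left (min_le_left _ _) (norm_nonneg _)).trans hε₀δ.le)
      ((inter_subset_inter_left _ hWΓ).trans hΓ) hw
  refine ⟨A, hAW, hπA, (hAJ.trans ?_).trans_lt hδ₀η⟩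
  nlinarith [norm_nonneg J, min_le_left δ₀ (1 / 2)]

variable [Fintype ι]

/-- Vectors of `Γ` close to the `L₀ (0, eⱼ)` are corrected by elements of `W` so as to lie in
`ker π`. -/
theorem eventually_exists_stdImage_le (hL₀ : Function.Injective L₀)
    (hΓ₀ : Γ₀.1 = stdImage L₀) (hπ : π ∘L L₀ = .fst ℝ P (ι → ℝ)) {η : ℝ} (hη : 0 < η) :
    ∀ᶠ Γ in 𝓝 Γ₀, ∀ W : Submodule ℝ (Euc n), (W : Set (Euc n)) ⊆ Γ.1 →
      finrank ℝ W = finrank ℝ P → ∃ L : P × (ι → ℝ) →L[ℝ] Euc n, ‖L - L₀‖ < η ∧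
        π ∘L L = .fst ℝ P (ι → ℝ) ∧ stdImage L ≤ Γ.1 := by
  classical
  let Ψ : (P →L[ℝ] Euc n) × (ι → Euc n) → (P × (ι → ℝ) →L[ℝ] Euc n) := fun a =>
    coprodLinearCombination a.1 fun j => a.2 j - a.1 (π (a.2 j))
  have hΨ : Continuous Ψ :=
    continuous_coprodLinearCombination.comp (f := fun a : (P →L[ℝ] Euc n) × (ι → Euc n) =>
      (a.1, fun j => a.2 j - a.1 (π (a.2 j)))) (by fun_prop)
  let b : ι → Euc n := fun j => L₀ (0, Pi.single j 1)
  have hb : Ψ (L₀ ∘L .inl ℝ P (ι → ℝ), b) = L₀ := by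
    have hπb : ∀ j, π (b j) = 0 := fun j => DFunLike.congr_fun hπ (0, Pi.single j 1)
    simpa [Ψ, hπb, Prod.mk_zero_zero] using (eq_coprodLinearCombination L₀).symm
  obtain ⟨ρ, hρ, hΨρ⟩ := Metric.continuousAt_iff.mp hΨ.continuousAt η hη
  rw [hb] at hΨρ
  have hbΓ : ∀ᶠ Γ in 𝓝 Γ₀, ∀ j, ∃ g ∈ Γ.1, ‖g - b j‖ < ρ := eventually_all.mpr fun j =>
    eventually_exists_mem_norm_sub_lt (hΓ₀ ▸ apply_mem_stdImage (mk_single_mem_stdSubgroup 0 j)) hρ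
  filter_upwards [hbΓ, eventually_exists_section_range_le hL₀ hΓ₀ hπ hρ] with Γ hgΓ hAΓ W hWΓ hW
  choose g hg hgb using hgΓ
  obtain ⟨A, hAW, hπA, hAL₀⟩ := hAΓ W hWΓ hW
  have hnear : dist (A, g) (L₀ ∘L .inl ℝ P (ι → ℝ), b) < ρ :=
    max_lt (by rwa [dist_eq_norm])
      ((dist_pi_lt_iff hρ).mpr fun j => (dist_eq_norm (g j) (b j)).trans_lt (hgb j))
  refine ⟨Ψ (A, g), dist_eq_norm (Ψ (A, g)) L₀ ▸ hΨρ hnear, ContinuousLinearMap.ext fun z => ?_,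
    stdImage_le (fun x => ?_) fun j => ?_⟩
  · simp [Ψ, coprodLinearCombination_apply, hπA]
  · rw [coprodLinearCombination_mk_zero]
    exact hWΓ (hAW x)
  · rw [coprodLinearCombination_zero_single]
    exact sub_mem (hg j) (hWΓ (hAW _))

theorem eventually_exists_eq_stdImage (hL₀ : Function.Injective L₀)
    (hΓ₀ : Γ₀.1 = stdImage L₀) (hπ : π ∘L L₀ = .fst ℝ P (ι → ℝ)) {η : ℝ} (hη : 0 < η) :
    ∀ᶠ Γ in 𝓝 Γ₀, ∀ L : P × (ι → ℝ) →L[ℝ] Euc n, Function.Injective L → Γ.1 = stdImage L →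
      ∃ L' : P × (ι → ℝ) →L[ℝ] Euc n, ‖L' - L₀‖ < η ∧
        π ∘L L' = .fst ℝ P (ι → ℝ) ∧ Γ.1 = stdImage L' := by
  obtain ⟨c, hc, hcL₀⟩ := exists_pos_forall_mul_norm_le_of_injective hL₀
  have hc6 : 0 < c / 6 := by positivity
  filter_upwards [eventually_exists_stdImage_le hL₀ hΓ₀ hπ (lt_min hη hc6),
    eventually_inter_closedBall_subset_thickening Γ₀ (‖L₀‖ + c) hc6] with Γ hle hnear L hL hΓ
  have hW : (((L ∘L .inl ℝ P (ι → ℝ)).range : Submodule ℝ (Euc n)) : Set (Euc n)) ⊆ Γ.1 := by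
    rintro _ ⟨x, rfl⟩
    exact hΓ ▸ apply_mem_stdImage (mk_zero_mem_stdSubgroup x)
  obtain ⟨L', hL', hπL', hL'Γ⟩ := hle _ hW (LinearMap.finrank_range_of_inj
    (hL.comp fun _ _ h => congrArg Prod.fst h))
  rw [hΓ, hΓ₀] at hnear
  rw [hΓ] at hL'Γ
  exact ⟨L', hL'.trans_le (min_le_left _ _), hπL', hΓ.trans <|
    stdImage_eq_of_le_of_near hc hcL₀ hL (hL'.trans_le (min_le_right _ _)) hL'Γ hnear⟩

end ChabautyPoint

section Stratum

variable {n p q : ℕ}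

theorem mem_stratum_iff_exists_isEmbedding {Γ : ChabautyPoint n} : Γ ∈ stratum n p q ↔
    ∃ f : (Fin p → ℝ) × (Fin q → ℤ) →+ Euc n, IsEmbedding f ∧ f.range = Γ.1 := by
  constructor
  · rintro ⟨e, he, he'⟩
    refine ⟨Γ.1.subtype.comp e.symm, IsEmbedding.subtypeVal.comp
      (⟨e.symm.toEquiv, he', he⟩ : _ ≃ₜ Γ.1).isEmbedding, ?_⟩
    rw [AddMonoidHom.range_comp, AddMonoidHom.range_eq_top.mpr e.symm.surjective,
      ← AddMonoidHom.range_eq_map, AddSubgroup.range_subtype]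
  · rintro ⟨f, hf, hΓ⟩
    let e := (AddMonoidHom.ofInjective hf.injective).trans (AddEquiv.addSubgroupCongr hΓ)
    have he : ∀ y, (e y : Euc n) = f y := fun _ => rfl
    refine ⟨e.symm, hf.continuous_iff.mpr ?_, hf.continuous.subtype_mk _⟩
    convert continuous_subtype_val using 1
    ext1 g
    rw [Function.comp_apply, ← he, e.apply_symm_apply]

theorem mem_stratum_iff_exists_eq_stdImage {Γ : ChabautyPoint n} : Γ ∈ stratum n p q ↔
    ∃ L : (Fin p → ℝ) × (Fin q → ℝ) →L[ℝ] Euc n, Function.Injective L ∧ Γ.1 = stdImage L := by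
  have hrange (L : (Fin p → ℝ) × (Fin q → ℝ) →L[ℝ] Euc n) :
      ((L : _ →+ Euc n).comp (stdHom (Fin p → ℝ) (Fin q))).range = stdImage L :=
    AddMonoidHom.range_comp _ _
  rw [mem_stratum_iff_exists_isEmbedding]
  constructor
  · rintro ⟨f, hf, hΓ⟩
    obtain ⟨L, hL⟩ := exists_clm_comp_stdHom_eq hf.continuous
    obtain ⟨δ, hδ, hfδ⟩ : ∃ δ > 0, ∀ y, ‖f y‖ < δ → ‖stdHom (Fin p → ℝ) (Fin q) y‖ < 1 := by
      have hball : stdHom (Fin p → ℝ) (Fin q) ⁻¹' ball 0 1 ∈ comap f (𝓝 0) := by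
        rw [← map_zero f, ← hf.nhds_eq_comap]
        exact isClosedEmbedding_stdHom.continuous.continuousAt.preimage_mem_nhds
          (by simpa using ball_mem_nhds _ one_pos)
      simpa [Set.subset_def] using (nhds_basis_ball.comap f).mem_iff.mp hball
    refine ⟨L, injective_of_forall_mem_stdSubgroup (r := 1) hδ ?_, ?_⟩
    · rintro _ ⟨y, rfl⟩ hy
      exact hfδ y (hL y ▸ hy)
    · rw [← hΓ, ← hrange]
      exact congrArg AddMonoidHom.range (AddMonoidHom.ext hL).symm
  · rintro ⟨L, hL, hΓ⟩
    exact ⟨_, (isClosedEmbedding_comp_stdHom hL).isEmbedding, (hrange L).trans hΓ.symm⟩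

/-- The orbit of `ℝ^p × ℤ^q`: an injective linear map, read as the first `p + q` columns of an
invertible matrix, is sent to the closed subgroup that it carves out of `ℝⁿ`. -/
def orbitMap (L : {L : (Fin p → ℝ) × (Fin q → ℝ) →L[ℝ] Euc n // Function.Injective L}) :
    stratum n p q :=
  ⟨⟨stdImage L.1, isClosed_stdImage L.2⟩,
    mem_stratum_iff_exists_eq_stdImage.mpr ⟨L.1, L.2, rfl⟩⟩

theorem orbitMap_surjective : Function.Surjective (orbitMap (n := n) (p := p) (q := q)) := by
  rintro ⟨Γ, hΓ⟩
  obtain ⟨L, hL, hΓL⟩ := mem_stratum_iff_exists_eq_stdImage.mp hΓ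
  exact ⟨⟨L, hL⟩, Subtype.ext (Subtype.ext hΓL.symm)⟩

theorem continuous_orbitMap : Continuous (orbitMap (n := n) (p := p) (q := q)) := by
  refine Continuous.subtype_mk (continuous_generateFrom_iff.mpr ?_) _
  rintro _ (⟨K, hK, rfl⟩ | ⟨U, hU, rfl⟩)
  · exact isOpen_iff_eventually.mpr fun L hL => continuous_subtype_val.continuousAt.eventually
      (eventually_stdImage_inter_eq_empty L.2 hK hL)
  · exact (isOpen_setOf_stdImage_inter_nonempty hU).preimage continuous_subtype_val

end Stratum

section Chart

variable {n p q : ℕ} {L₀ : (Fin p → ℝ) × (Fin q → ℝ) →L[ℝ] Euc n} {c : ℝ}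
  {π : Euc n →L[ℝ] (Fin p → ℝ)}

theorem injective_add_of_mem_ball (hL₀ : ∀ z, c * ‖z‖ ≤ ‖L₀ z‖)
    {k : sliceDirection ((Fin p → ℝ) × (Fin q → ℝ)) π} (hk : k ∈ ball 0 (c / 3)) :
    Function.Injective (L₀ + (k : (Fin p → ℝ) × (Fin q → ℝ) →L[ℝ] Euc n)) := by
  have hk' : ‖(k : (Fin p → ℝ) × (Fin q → ℝ) →L[ℝ] Euc n)‖ < c / 3 := mem_ball_zero_iff.mp hk
  refine injective_of_norm_sub_lt hL₀ ?_
  rw [add_sub_cancel_left]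
  linarith [norm_nonneg (k : (Fin p → ℝ) × (Fin q → ℝ) →L[ℝ] Euc n)]

/-- The inverse chart around `stdImage L₀`: the restriction of the orbit map to the part of the
slice `L₀ + sliceDirection π` close to `L₀`. -/
def sliceChart (hL₀ : ∀ z, c * ‖z‖ ≤ ‖L₀ z‖) (π : Euc n →L[ℝ] (Fin p → ℝ))
    (k : ball (0 : sliceDirection ((Fin p → ℝ) × (Fin q → ℝ)) π) (c / 3)) : stratum n p q :=
  orbitMap ⟨L₀ + k, injective_add_of_mem_ball hL₀ k.2⟩

variable {hL₀ : ∀ z, c * ‖z‖ ≤ ‖L₀ z‖}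

theorem continuous_sliceChart : Continuous (sliceChart hL₀ π) :=
  continuous_orbitMap.comp (Continuous.subtype_mk (by fun_prop) _)

theorem sliceChart_injective (hπ : π ∘L L₀ = .fst ℝ (Fin p → ℝ) (Fin q → ℝ)) :
    Function.Injective (sliceChart hL₀ π) := by
  rintro ⟨⟨k, hkπ⟩, hk⟩ ⟨⟨k', hk'π⟩, hk'⟩ hkk'
  replace hk : ‖k‖ < c / 3 := mem_ball_zero_iff.mp hk
  replace hk' : ‖k'‖ < c / 3 := mem_ball_zero_iff.mp hk'
  have hclose : ‖(L₀ + k) - (L₀ + k')‖ < c - c / 3 := by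
    rw [add_sub_add_left_eq_sub]
    linarith [norm_sub_le k k']
  have hlower := sub_mul_norm_le_of_norm_sub_le (L' := L₀ + k') (r := c / 3) hL₀
    (by rw [add_sub_cancel_left]; exact hk'.le)
  refine Subtype.ext (Subtype.ext (add_left_cancel (a := L₀) ?_))
  exact eq_of_stdImage_eq hlower hclose
    ((comp_add_of_mem_sliceDirection hkπ L₀).trans hπ)
    ((comp_add_of_mem_sliceDirection hk'π L₀).trans hπ)
    (congrArg (fun Γ : stratum n p q => Γ.1.1) hkk')

theorem isOpenMap_sliceChart (hπ : π ∘L L₀ = .fst ℝ (Fin p → ℝ) (Fin q → ℝ)) :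
    IsOpenMap (sliceChart hL₀ π) := by
  refine isOpenMap_iff_nhds_le.mpr fun k S hS => ?_
  obtain ⟨η, hη, hηS⟩ := Metric.mem_nhds_iff.mp hS
  obtain ⟨ρ, hρ, hρc⟩ := exists_ball_subset_ball k.2
  have hev := ChabautyPoint.eventually_exists_eq_stdImage (Γ₀ := (sliceChart hL₀ π k).1)
    (injective_add_of_mem_ball hL₀ k.2) rfl
    ((comp_add_of_mem_sliceDirection k.1.2 L₀).trans hπ) (lt_min hη hρ)
  filter_upwards [continuous_subtype_val.continuousAt.eventually hev] with Γ hΓ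
  obtain ⟨L, rfl⟩ := orbitMap_surjective Γ
  obtain ⟨L', hL', hπL', hΓL'⟩ := hΓ L.1 L.2 rfl
  let k' : sliceDirection _ π := ⟨L' - L₀, by
    rw [mem_sliceDirection, ContinuousLinearMap.comp_sub, hπL', hπ, sub_self]⟩
  have hk' : dist k' k < min η ρ := by
    rw [dist_eq_norm]
    change ‖L' - L₀ - k.1.1‖ < _
    rwa [sub_sub]
  let y : ball (0 : sliceDirection _ π) (c / 3) := ⟨k', hρc (hk'.trans_le (min_le_right _ _))⟩
  have hy : sliceChart hL₀ π y = orbitMap L := by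
    refine Subtype.ext (Subtype.ext (Eq.trans ?_ hΓL'.symm))
    exact congrArg stdImage (add_sub_cancel L₀ L')
  exact hy ▸ hηS (hk'.trans_le (min_le_left _ _) : dist y k < η)

theorem isOpenEmbedding_sliceChart (hπ : π ∘L L₀ = .fst ℝ (Fin p → ℝ) (Fin q → ℝ)) :
    IsOpenEmbedding (sliceChart hL₀ π) :=
  .of_continuous_injective_isOpenMap continuous_sliceChart (sliceChart_injective hπ)
    (isOpenMap_sliceChart hπ)

end Chart

/-- The stratum 𝒞^{(p,q)} is a topological manifold of dimension (p+q)(n-p): every point has an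
open neighborhood homeomorphic to an open subset of ℝ^{(p+q)(n-p)}. -/
theorem stratum_is_manifold (n p q : ℕ) (hpq : p + q ≤ n) (x : stratum n p q) :
    ∃ U : Set (stratum n p q), IsOpen U ∧ x ∈ U ∧
      ∃ V : Set (EuclideanSpace ℝ (Fin ((p + q) * (n - p)))), IsOpen V ∧
        Nonempty (U ≃ₜ V) := by
  obtain ⟨⟨L₀, hinj⟩, rfl⟩ := orbitMap_surjective x
  obtain ⟨c, hc, hL₀⟩ := exists_pos_forall_mul_norm_le_of_injective hinj
  obtain ⟨π, hπ⟩ := exists_comp_eq_fst hinj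
  have hsurj : Function.Surjective π := fun y => ⟨L₀ (y, 0), DFunLike.congr_fun hπ (y, 0)⟩
  have hψ := isOpenEmbedding_sliceChart (hL₀ := hL₀) hπ
  let e : sliceDirection ((Fin p → ℝ) × (Fin q → ℝ)) π ≃L[ℝ]
      EuclideanSpace ℝ (Fin ((p + q) * (n - p))) :=
    .ofFinrankEq (by simp [finrank_sliceDirection hsurj])
  refine ⟨range (sliceChart hL₀ π), hψ.isOpen_range, ⟨⟨0, mem_ball_self (by positivity)⟩, ?_⟩,
    e '' ball 0 (c / 3), e.toHomeomorph.isOpenMap _ isOpen_ball,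
    ⟨hψ.isEmbedding.toHomeomorph.symm.trans (e.toHomeomorph.image _)⟩⟩
  simp [sliceChart]
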